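/- Let J and G be finite sets, d_A, d_B ≥ 1, and let {L^j}_{j∈J} be d_B × d_A complex matrices with ∑_j (L^j)† L^j = 1_{d_A} (Kraus operators of a quantum channel M(X) = ∑_j L^j X (L^j)†). Suppose that for each g ∈ G there are unitaries U^g on ℂ^{d_A} and V^g on ℂ^{d_B} such that M(U^g X (U^g)†) = V^g M(X) (V^g)† for every d_A × d_A matrix X (covariance of the channel). Let U^M : ℂ^{d_A} → ℂ^{d_B} ⊗ ℂ^{|J|} be the canonical isometric extension U^M = ∑_j L^j ⊗ |j⟩, i.e. the matrix with entries (U^M)_{(b,j),a} = (L^j)_{b,a}. Then for every g ∈ G there exists a unitary W^g on ℂ^{|J|} such that U^M U^g = (V^g ⊗ W^g) U^M. -/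

import Mathlib

open Matrix Kronecker
open scoped ComplexOrder

noncomputable section

/-!
Covariance says that `{L^j U}` and `{V L^j}` are Kraus families of the same map. Two Kraus families
of one map, indexed by the same set, differ by a unitary mixing of the index: flatten each family
into a matrix whose `j`-th row is the `j`-th operator. The Gram matrix of the columns is then the
Choi matrix of the map, and two matrices with equal column Gram matrices differ by a unitary on the
left, since the isometry between their column spaces extends to the whole space. This mixing
unitary is the required `W` on the environment.
-/

section UnitaryFreedom

variable {𝕜 : Type*} [RCLike 𝕜]

theorem exists_linearIsometryEquiv_apply_eq_of_norm_eq {E F : Type*} [AddCommGroup E] [Module 𝕜 E]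
    [NormedAddCommGroup F] [InnerProductSpace 𝕜 F] [FiniteDimensional 𝕜 F] (f g : E →ₗ[𝕜] F)
    (hfg : ∀ x, ‖f x‖ = ‖g x‖) : ∃ T : F ≃ₗᵢ[𝕜] F, ∀ x, T (g x) = f x := by
  have ker_le : g.ker ≤ f.ker := fun x hx ↦ by
    rw [LinearMap.mem_ker, ← norm_eq_zero] at hx ⊢
    rw [hfg, hx]
  let φ : g.range →ₗ[𝕜] F := g.ker.liftQ f ker_le ∘ₗ g.quotKerEquivRange.symm
  have φ_apply (x : E) : φ ⟨g x, g.mem_range_self x⟩ = f x := by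
    simp only [φ, LinearMap.comp_apply, LinearEquiv.coe_coe,
      LinearMap.quotKerEquivRange_symm_apply_image, Submodule.mkQ_apply, Submodule.liftQ_apply]
  have norm_φ : ∀ y, ‖φ y‖ = ‖y‖ := by
    rintro ⟨_, x, rfl⟩
    rw [φ_apply, hfg, Submodule.coe_norm]
  let φᵢ : g.range →ₗᵢ[𝕜] F := ⟨φ, norm_φ⟩
  exact ⟨φᵢ.extend.toLinearIsometryEquiv rfl,
    fun x ↦ (φᵢ.extend_apply ⟨g x, g.mem_range_self x⟩).trans (φ_apply x)⟩

variable {J : Type*} [Fintype J]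

theorem exists_mem_unitaryGroup_mulVec_eq [DecidableEq J]
    (T : EuclideanSpace 𝕜 J ≃ₗᵢ[𝕜] EuclideanSpace 𝕜 J) :
    ∃ W ∈ unitaryGroup J 𝕜, ∀ x : J → 𝕜, WithLp.toLp 2 (W *ᵥ x) = T (WithLp.toLp 2 x) := by
  let u := Unitary.linearIsometryEquiv.symm T
  let e := toEuclideanCLM (n := J) (𝕜 := 𝕜)
  refine ⟨e.symm u, Unitary.map_mem e.symm u.2, fun x ↦ ?_⟩
  rw [← toEuclideanCLM_toLp, e.apply_symm_apply]
  rfl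

theorem inner_toLp_mulVec_self {K : Type*} [Fintype K] (A : Matrix J K 𝕜) (x : K → 𝕜) :
    inner 𝕜 (WithLp.toLp 2 (A *ᵥ x)) (WithLp.toLp 2 (A *ᵥ x)) = star x ⬝ᵥ (Aᴴ * A) *ᵥ x := by
  rw [EuclideanSpace.inner_toLp_toLp, dotProduct_comm, star_mulVec, ← mulVec_mulVec,
    dotProduct_mulVec (star x)]

theorem exists_mem_unitaryGroup_mul_eq_of_conjTranspose_mul_self_eq [DecidableEq J] {K : Type*}
    [Finite K] {A B : Matrix J K 𝕜} (h : Aᴴ * A = Bᴴ * B) :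
    ∃ W ∈ unitaryGroup J 𝕜, A = W * B := by
  classical
  have := Fintype.ofFinite K
  let euclideanMulVec (M : Matrix J K 𝕜) : (K → 𝕜) →ₗ[𝕜] EuclideanSpace 𝕜 J :=
    (WithLp.linearEquiv 2 𝕜 (J → 𝕜)).symm ∘ₗ M.mulVecLin
  have norm_eq (x : K → 𝕜) : ‖euclideanMulVec A x‖ = ‖euclideanMulVec B x‖ := by
    change ‖WithLp.toLp 2 (A *ᵥ x)‖ = ‖WithLp.toLp 2 (B *ᵥ x)‖
    rw [norm_eq_sqrt_re_inner (𝕜 := 𝕜), norm_eq_sqrt_re_inner (𝕜 := 𝕜), inner_toLp_mulVec_self,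
      inner_toLp_mulVec_self, h]
  obtain ⟨T, hT⟩ := exists_linearIsometryEquiv_apply_eq_of_norm_eq _ _ norm_eq
  obtain ⟨W, hW, hWT⟩ := exists_mem_unitaryGroup_mulVec_eq T
  refine ⟨W, hW, ext_of_mulVec_single fun k ↦ ?_⟩
  rw [← mulVec_mulVec]
  exact WithLp.toLp_injective 2 ((hT _).symm.trans (hWT _).symm)

end UnitaryFreedom

section KrausFamily

variable {R J J' m n m' n' : Type*} [CommSemiring R]

/-- The canonical extension `∑ j, L j ⊗ |j⟩` of a Kraus family `L`, as a matrix from `m` to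
`n × J`; the second factor is the environment. It is an isometry when `∑ j, (L j)ᴴ * L j = 1`. -/
def canonicalExtension (L : J → Matrix n m R) : Matrix (n × J) m R :=
  of fun p a ↦ L p.2 p.1 a

theorem canonicalExtension_mul [Fintype m] (L : J → Matrix n m R) (U : Matrix m m' R) :
    canonicalExtension L * U = canonicalExtension fun j ↦ L j * U :=
  rfl

theorem kronecker_mul_canonicalExtension [Fintype J] [Fintype n] (V : Matrix n' n R)
    (W : Matrix J' J R) (L : J → Matrix n m R) :
    (V ⊗ₖ W) * canonicalExtension L = canonicalExtension fun j ↦ ∑ k, W j k • (V * L k) := by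
  ext ⟨b, j⟩ a
  simp only [canonicalExtension, mul_apply, of_apply, kroneckerMap_apply, Fintype.sum_prod_type,
    Matrix.sum_apply, Matrix.smul_apply, smul_eq_mul, Finset.mul_sum]
  rw [Finset.sum_comm]
  exact Finset.sum_congr rfl fun k _ ↦ Finset.sum_congr rfl fun c _ ↦ by ring

variable [StarRing R] [Fintype J] [Fintype m]

/-- The completely positive map `X ↦ ∑ j, L j * X * (L j)ᴴ` with Kraus operators `L`. -/
def krausMap (L : J → Matrix n m R) (X : Matrix m m R) : Matrix n n R :=
  ∑ j, L j * X * (L j)ᴴ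

theorem krausMap_conj [Fintype m'] (L : J → Matrix n m R) (U : Matrix m m' R)
    (X : Matrix m' m' R) :
    krausMap L (U * X * Uᴴ) = krausMap (fun j ↦ L j * U) X := by
  simp only [krausMap, conjTranspose_mul, Matrix.mul_assoc]

theorem conj_krausMap [Fintype n] (V : Matrix n' n R) (L : J → Matrix n m R) (X : Matrix m m R) :
    V * krausMap L X * Vᴴ = krausMap (fun j ↦ V * L j) X := by
  simp only [krausMap, conjTranspose_mul, Matrix.mul_sum, Matrix.sum_mul, Matrix.mul_assoc]

theorem krausMap_single_apply [DecidableEq m] (L : J → Matrix n m R) (a a' : m) (b b' : n) :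
    krausMap L (single a a' 1) b b' = ∑ j, L j b a * star (L j b' a') := by
  simp only [krausMap, Matrix.sum_apply, single_eq_single_vecMulVec_single, mul_vecMulVec,
    vecMulVec_mul, vecMulVec_apply, mulVec_single_one, single_one_vecMul, col_apply, row_apply,
    conjTranspose_apply]

/-- The matrix whose `j`-th row is the vectorization of `L j`. Its Gram matrix of columns is the
Choi matrix of `krausMap L`. -/
def vecRows (L : J → Matrix n m R) : Matrix J (m × n) R :=
  of fun j ↦ vec (L j)

theorem conjTranspose_vecRows_mul_vecRows_apply [DecidableEq m] (L : J → Matrix n m R)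
    (a a' : m) (b b' : n) :
    ((vecRows L)ᴴ * vecRows L) (a', b') (a, b) = krausMap L (single a a' 1) b b' := by
  simp only [krausMap_single_apply, vecRows, mul_apply, conjTranspose_apply, of_apply, vec,
    mul_comm]

end KrausFamily

section Covariance

variable {𝕜 J m n m' n' : Type*} [RCLike 𝕜] [Fintype J] [DecidableEq J] [Fintype m]

theorem exists_mem_unitaryGroup_eq_sum_smul_of_krausMap_eq [Finite n] {K L : J → Matrix n m 𝕜}
    (h : krausMap K = krausMap L) :
    ∃ W ∈ unitaryGroup J 𝕜, ∀ j, K j = ∑ k, W j k • L k := by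
  classical
  have gram_eq : (vecRows K)ᴴ * vecRows K = (vecRows L)ᴴ * vecRows L := by
    ext ⟨a', b'⟩ ⟨a, b⟩
    rw [conjTranspose_vecRows_mul_vecRows_apply, conjTranspose_vecRows_mul_vecRows_apply, h]
  obtain ⟨W, hW, hKL⟩ := exists_mem_unitaryGroup_mul_eq_of_conjTranspose_mul_self_eq gram_eq
  refine ⟨W, hW, fun j ↦ ?_⟩
  ext b a
  simpa only [vecRows, mul_apply, of_apply, vec, Matrix.sum_apply, Matrix.smul_apply, smul_eq_mul]
    using congr_fun₂ hKL j (a, b)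

theorem stmt4_general [Fintype n] [Fintype m'] [Finite n'] (K : J → Matrix n' m' 𝕜)
    (L : J → Matrix n m 𝕜) (U : Matrix m' m 𝕜) (V : Matrix n' n 𝕜)
    (hcov : ∀ X, krausMap K (U * X * Uᴴ) = V * krausMap L X * Vᴴ) :
    ∃ W ∈ unitaryGroup J 𝕜, canonicalExtension K * U = (V ⊗ₖ W) * canonicalExtension L := by
  have krausMap_eq : krausMap (fun j ↦ K j * U) = krausMap fun j ↦ V * L j :=
    funext fun X ↦ by rw [← krausMap_conj, hcov, conj_krausMap]
  obtain ⟨W, hW, hKL⟩ := exists_mem_unitaryGroup_eq_sum_smul_of_krausMap_eq krausMap_eq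
  exact ⟨W, hW, by rw [canonicalExtension_mul, kronecker_mul_canonicalExtension, funext hKL]⟩

end Covariance

/-- for a covariant channel with Kraus operators `{L^j}`, the canonical
isometric extension `U^M = ∑_j L^j ⊗ |j⟩` satisfies `U^M U^g = (V^g ⊗ W^g) U^M` for some
unitary `W^g` on the environment. -/
theorem stmt4 {J G : Type*} [Fintype J] [DecidableEq J] [Fintype G] {dA dB : ℕ}
    (L : J → Matrix (Fin dB) (Fin dA) ℂ)
    (hL : ∑ j, (L j)ᴴ * L j = (1 : Matrix (Fin dA) (Fin dA) ℂ))
    (U : G → Matrix (Fin dA) (Fin dA) ℂ) (V : G → Matrix (Fin dB) (Fin dB) ℂ)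
    (hU : ∀ g, U g ∈ Matrix.unitaryGroup (Fin dA) ℂ)
    (hV : ∀ g, V g ∈ Matrix.unitaryGroup (Fin dB) ℂ)
    (hcov : ∀ (g : G) (X : Matrix (Fin dA) (Fin dA) ℂ),
      ∑ j, L j * (U g * X * (U g)ᴴ) * (L j)ᴴ
        = V g * (∑ j, L j * X * (L j)ᴴ) * (V g)ᴴ) :
    ∀ g : G, ∃ W : Matrix J J ℂ, W ∈ Matrix.unitaryGroup J ℂ ∧
      (Matrix.of fun (p : Fin dB × J) (a : Fin dA) => L p.2 p.1 a) * U g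
        = ((V g) ⊗ₖ W) * (Matrix.of fun (p : Fin dB × J) (a : Fin dA) => L p.2 p.1 a) := by
  exact fun g ↦ stmt4_general L L (U g) (V g) (hcov g)
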